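/- arXiv:1410.2499 — 4 statements merged into one kernel-verified Lean document; each statement's English description precedes it below -/
import Mathlib

section
/- For any Moreau–Jean step, the discrete-time dissipation equality holds: E(q_{k+1},v_{k+1}) − E(q_k,v_k) − W_ext − W_damp = (1/2 − θ)·( ‖v_{k+1}−v_k‖²_M + ‖q_{k+1}−q_k‖²_K ) + U_{k+θ}ᵀ P_{k+1}, where U_{k+θ} = (1−θ)U_k + θ U_{k+1}. -/
open Matrix

/-!
The point `x_{k+θ}` is the midpoint of `x_k` and `x_{k+1}` shifted by `(θ - 1/2) (x_{k+1} - x_k)`.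
For a symmetric form, pairing an increment with the midpoint gives exactly the increment of the
energy, so pairing it with `x_{k+θ}` leaves a multiple `θ - 1/2` of the square of the increment.
Testing the momentum balance against `v_{k+θ}` produces such pairings for both `M` and `K`, because
`h v_{k+θ}` is the position increment.
-/

section MoreauJean

open AffineMap

variable {R 𝕜 ι κ : Type*} [CommRing R] [Field 𝕜] [Fintype ι]

theorem dotProduct_mulVec_comm_of_isSymm {A : Matrix ι ι R} (hA : A.IsSymm) (x y : ι → R) :
    x ⬝ᵥ A *ᵥ y = y ⬝ᵥ A *ᵥ x := by
  rw [← dotProduct_transpose_mulVec, hA.eq]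

theorem mulVec_lineMap (A : Matrix κ ι R) (a b : ι → R) (θ : R) :
    A *ᵥ lineMap a b θ = lineMap (A *ᵥ a) (A *ᵥ b) θ :=
  A.mulVecLin.toAffineMap.apply_lineMap a b θ

theorem dotProduct_mulVec_self_sub_self {A : Matrix ι ι R} (hA : A.IsSymm) (θ : R)
    (a b : ι → R) :
    b ⬝ᵥ A *ᵥ b - a ⬝ᵥ A *ᵥ a =
      (1 - 2 * θ) * ((b - a) ⬝ᵥ A *ᵥ (b - a)) + 2 * ((b - a) ⬝ᵥ A *ᵥ lineMap a b θ) := by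
  have hab : a ⬝ᵥ A *ᵥ b = b ⬝ᵥ A *ᵥ a := dotProduct_mulVec_comm_of_isSymm hA a b
  simp only [lineMap_apply_module, mulVec_add, mulVec_sub, mulVec_smul, dotProduct_add,
    dotProduct_sub, dotProduct_smul, sub_dotProduct, smul_eq_mul, hab]
  ring

variable [Fintype κ]

theorem transpose_mulVec_dotProduct (G : Matrix ι κ R) (x : ι → R) (p : κ → R) :
    Gᵀ *ᵥ x ⬝ᵥ p = x ⬝ᵥ G *ᵥ p := by
  rw [dotProduct_comm, dotProduct_transpose_mulVec]

/-- One step of the Moreau–Jean scheme with time step `h` and parameter `θ`: the discrete momentum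
balance and the position update. The intermediate value `x_{k+θ}` is `lineMap xk xk1 θ`, the suffix
`1` stands for the index `k + 1`, and `Fθ`, `P` are `F_{k+θ}`, `P_{k+1}`. -/
structure IsMoreauJeanStep (h θ : R) (M K C : Matrix ι ι R) (G : Matrix ι κ R)
    (qk qk1 vk vk1 Fθ : ι → R) (P : κ → R) : Prop where
  momentum_balance : M *ᵥ (vk1 - vk) + h • K *ᵥ lineMap qk qk1 θ + h • C *ᵥ lineMap vk vk1 θ
    - h • Fθ = G *ᵥ P
  position_update : qk1 = qk + h • lineMap vk vk1 θ

theorem IsMoreauJeanStep.work_balance {h θ : R} {M K C : Matrix ι ι R} {G : Matrix ι κ R}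
    {qk qk1 vk vk1 Fθ : ι → R} {P : κ → R}
    (step : IsMoreauJeanStep h θ M K C G qk qk1 vk vk1 Fθ P) :
    lineMap vk vk1 θ ⬝ᵥ M *ᵥ (vk1 - vk) + (qk1 - qk) ⬝ᵥ K *ᵥ lineMap qk qk1 θ =
      h * (lineMap vk vk1 θ ⬝ᵥ Fθ) - h * (lineMap vk vk1 θ ⬝ᵥ C *ᵥ lineMap vk vk1 θ)
        + lineMap (Gᵀ *ᵥ vk) (Gᵀ *ᵥ vk1) θ ⬝ᵥ P := by
  have position_increment : qk1 - qk = h • lineMap vk vk1 θ :=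
    sub_eq_of_eq_add' step.position_update
  rw [← mulVec_lineMap, transpose_mulVec_dotProduct, ← step.momentum_balance, position_increment]
  simp only [dotProduct_add, dotProduct_sub, dotProduct_smul, smul_dotProduct, smul_eq_mul]
  ring

/-- The total mechanical energy `E(q, v)`: kinetic energy for the mass matrix `M` plus elastic
energy for the stiffness matrix `K`. -/
def mechanicalEnergy (M K : Matrix ι ι 𝕜) (q v : ι → 𝕜) : 𝕜 :=
  1 / 2 * (v ⬝ᵥ M *ᵥ v) + 1 / 2 * (q ⬝ᵥ K *ᵥ q)

theorem mechanicalEnergy_sub [NeZero (2 : 𝕜)] {M K : Matrix ι ι 𝕜} (hM : M.IsSymm)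
    (hK : K.IsSymm) (θ : 𝕜) (qk qk1 vk vk1 : ι → 𝕜) :
    mechanicalEnergy M K qk1 vk1 - mechanicalEnergy M K qk vk =
      (1 / 2 - θ) * ((vk1 - vk) ⬝ᵥ M *ᵥ (vk1 - vk) + (qk1 - qk) ⬝ᵥ K *ᵥ (qk1 - qk))
        + (lineMap vk vk1 θ ⬝ᵥ M *ᵥ (vk1 - vk) + (qk1 - qk) ⬝ᵥ K *ᵥ lineMap qk qk1 θ) := by
  have kinetic := dotProduct_mulVec_self_sub_self hM θ vk vk1
  have elastic := dotProduct_mulVec_self_sub_self hK θ qk qk1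
  rw [dotProduct_mulVec_comm_of_isSymm hM (lineMap vk vk1 θ), mechanicalEnergy, mechanicalEnergy]
  field_simp
  linear_combination kinetic + elastic

theorem moreau_jean_dissipation_equality_general [NeZero (2 : 𝕜)] {h θ : 𝕜}
    {M K C : Matrix ι ι 𝕜} {G : Matrix ι κ 𝕜} (hM : M.IsSymm) (hK : K.IsSymm)
    {qk qk1 vk vk1 Fθ : ι → 𝕜} {P : κ → 𝕜}
    (step : IsMoreauJeanStep h θ M K C G qk qk1 vk vk1 Fθ P) :
    mechanicalEnergy M K qk1 vk1 - mechanicalEnergy M K qk vk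
      - h * (lineMap vk vk1 θ ⬝ᵥ Fθ)
      - (-(h * (lineMap vk vk1 θ ⬝ᵥ C *ᵥ lineMap vk vk1 θ))) =
      (1 / 2 - θ) * ((vk1 - vk) ⬝ᵥ M *ᵥ (vk1 - vk) + (qk1 - qk) ⬝ᵥ K *ᵥ (qk1 - qk))
        + lineMap (Gᵀ *ᵥ vk) (Gᵀ *ᵥ vk1) θ ⬝ᵥ P := by
  rw [mechanicalEnergy_sub hM hK θ, step.work_balance]
  ring

end MoreauJean

/-- Discrete-time dissipation equality of the Moreau–Jean scheme over one step. -/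
theorem moreau_jean_dissipation_equality
    (n m : ℕ) (hn : 1 ≤ n) (hm : 1 ≤ m)
    (h θ : ℝ) (hh : 0 < h) (hθ0 : 0 ≤ θ) (hθ1 : θ ≤ 1)
    (M K C : Matrix (Fin n) (Fin n) ℝ) (G : Matrix (Fin n) (Fin m) ℝ)
    (hM : M.PosDef) (hK : K.PosSemidef)
    (qk qk1 vk vk1 Fθ : Fin n → ℝ) (P : Fin m → ℝ)
    (heq : M.mulVec (vk1 - vk) + h • K.mulVec ((1 - θ) • qk + θ • qk1)
        + h • C.mulVec ((1 - θ) • vk + θ • vk1) - h • Fθ = G.mulVec P)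
    (hq : qk1 = qk + h • ((1 - θ) • vk + θ • vk1)) :
    (1/2 * (vk1 ⬝ᵥ M.mulVec vk1) + 1/2 * (qk1 ⬝ᵥ K.mulVec qk1))
      - (1/2 * (vk ⬝ᵥ M.mulVec vk) + 1/2 * (qk ⬝ᵥ K.mulVec qk))
      - h * (((1 - θ) • vk + θ • vk1) ⬝ᵥ Fθ)
      - (-(h * (((1 - θ) • vk + θ • vk1) ⬝ᵥ C.mulVec ((1 - θ) • vk + θ • vk1))))
    = (1/2 - θ) * ((vk1 - vk) ⬝ᵥ M.mulVec (vk1 - vk)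
        + (qk1 - qk) ⬝ᵥ K.mulVec (qk1 - qk))
      + ((1 - θ) • (Gᵀ.mulVec vk) + θ • (Gᵀ.mulVec vk1)) ⬝ᵥ P := by
  simp only [← AffineMap.lineMap_apply_module] at heq hq ⊢
  exact moreau_jean_dissipation_equality_general (isHermitian_iff_isSymm.mp hM.isHermitian)
    (isHermitian_iff_isSymm.mp hK.isHermitian) ⟨heq, hq⟩
end

section
/- For a Moreau–Jean step whose local velocities and impulse satisfy the discrete contact conditions, one has U_{k+θ}ᵀ P_{k+1} = Σ_{α ∈ I₁} (1 − θ(1+e^α)) U^α_k P^α_{k+1}; consequently, if θ ≤ 1/(1+e^α) for every α ∈ I₁, then U_{k+θ}ᵀ P_{k+1} ≤ 0, where U_{k+θ} = (1−θ)U_k + θ U_{k+1}. -/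
open Matrix BigOperators

section Contact

variable {ι R : Type*}

theorem dotProduct_eq_sum_of_eq_zero_of_notMem [Fintype ι] [NonUnitalNonAssocSemiring R]
    {s : Finset ι} {w : ι → R} (hw : ∀ i ∉ s, w i = 0) (v : ι → R) :
    v ⬝ᵥ w = ∑ i ∈ s, v i * w i :=
  (Finset.sum_subset s.subset_univ fun i _ hi => by rw [hw i hi, mul_zero]).symm

theorem theta_velocity_mul_impulse_eq [CommRing R] {u u' e p : R}
    (hcompl : (u' + e * u) * p = 0) (θ : R) :
    ((1 - θ) * u + θ * u') * p = (1 - θ * (1 + e)) * u * p := by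
  linear_combination θ * hcompl

theorem theta_velocity_dotProduct_impulse_eq_sum [Fintype ι] [CommRing R]
    {U U' P e : ι → R} {I : Finset ι} (hPout : ∀ α ∉ I, P α = 0)
    (hcompl : ∀ α ∈ I, (U' α + e α * U α) * P α = 0) (θ : R) :
    ((1 - θ) • U + θ • U') ⬝ᵥ P = ∑ α ∈ I, (1 - θ * (1 + e α)) * U α * P α :=
  (dotProduct_eq_sum_of_eq_zero_of_notMem hPout _).trans <|
    Finset.sum_congr rfl fun α hα => theta_velocity_mul_impulse_eq (hcompl α hα) θ

theorem sum_restitution_work_nonpos [CommRing R] [PartialOrder R] [IsOrderedRing R]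
    {U P e : ι → R} {I : Finset ι} {θ : R} (hU : ∀ α ∈ I, U α ≤ 0) (hP : ∀ α ∈ I, 0 ≤ P α)
    (hθ : ∀ α ∈ I, θ * (1 + e α) ≤ 1) :
    ∑ α ∈ I, (1 - θ * (1 + e α)) * U α * P α ≤ 0 :=
  Finset.sum_nonpos fun α hα =>
    mul_nonpos_of_nonpos_of_nonneg
      (mul_nonpos_of_nonneg_of_nonpos (sub_nonneg.mpr (hθ α hα)) (hU α hα)) (hP α hα)

theorem moreau_jean_contact_work_general [Fintype ι] [Field R] [LinearOrder R]
    [IsStrictOrderedRing R] {U U' P e : ι → R} {I : Finset ι} (θ : R)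
    (he : ∀ α ∈ I, -1 < e α) (hPout : ∀ α ∉ I, P α = 0)
    (hU : ∀ α ∈ I, U α ≤ 0) (hP : ∀ α ∈ I, 0 ≤ P α)
    (hcompl : ∀ α ∈ I, (U' α + e α * U α) * P α = 0) :
    ((1 - θ) • U + θ • U') ⬝ᵥ P = ∑ α ∈ I, (1 - θ * (1 + e α)) * U α * P α
    ∧ ((∀ α ∈ I, θ ≤ 1 / (1 + e α)) → ((1 - θ) • U + θ • U') ⬝ᵥ P ≤ 0) := by
  have work_eq := theta_velocity_dotProduct_impulse_eq_sum hPout hcompl θ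
  refine ⟨work_eq, fun hθ => work_eq.trans_le (sum_restitution_work_nonpos hU hP fun α hα => ?_)⟩
  have one_add_pos : 0 < 1 + e α := neg_lt_iff_pos_add'.mp (he α hα)
  exact (le_div_iff₀ one_add_pos).mp (hθ α hα)

end Contact

/-- For a Moreau–Jean step satisfying the discrete contact conditions,
`U_{k+θ}ᵀ P_{k+1} = Σ_{α ∈ I₁} (1 − θ(1+eα)) U_kα P_{k+1}α`, and if
`θ ≤ 1/(1+eα)` for every `α ∈ I₁` then `U_{k+θ}ᵀ P_{k+1} ≤ 0`. -/
theorem moreau_jean_contact_work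
    (n m : ℕ) (hn : 1 ≤ n) (hm : 1 ≤ m)
    (h θ : ℝ) (hh : 0 < h) (hθ0 : 0 ≤ θ) (hθ1 : θ ≤ 1)
    (M K C : Matrix (Fin n) (Fin n) ℝ) (G : Matrix (Fin n) (Fin m) ℝ)
    (hM : M.PosDef) (hK : K.PosSemidef)
    (qk qk1 vk vk1 Fθ : Fin n → ℝ) (P : Fin m → ℝ)
    (heq : M.mulVec (vk1 - vk) + h • K.mulVec ((1 - θ) • qk + θ • qk1)
        + h • C.mulVec ((1 - θ) • vk + θ • vk1) - h • Fθ = G.mulVec P)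
    (hq : qk1 = qk + h • ((1 - θ) • vk + θ • vk1))
    (e : Fin m → ℝ) (I₁ : Finset (Fin m))
    (he : ∀ α, 0 ≤ e α ∧ e α ≤ 1)
    (hPout : ∀ α ∉ I₁, P α = 0)
    (hc : ∀ α ∈ I₁, Gᵀ.mulVec vk α ≤ 0
        ∧ 0 ≤ Gᵀ.mulVec vk1 α + e α * Gᵀ.mulVec vk α
        ∧ 0 ≤ P α
        ∧ (Gᵀ.mulVec vk1 α + e α * Gᵀ.mulVec vk α) * P α = 0) :
    ((1 - θ) • (Gᵀ.mulVec vk) + θ • (Gᵀ.mulVec vk1)) ⬝ᵥ P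
      = ∑ α ∈ I₁, (1 - θ * (1 + e α)) * Gᵀ.mulVec vk α * P α
    ∧ ((∀ α ∈ I₁, θ ≤ 1 / (1 + e α)) →
        ((1 - θ) • (Gᵀ.mulVec vk) + θ • (Gᵀ.mulVec vk1)) ⬝ᵥ P ≤ 0) := by
  exact moreau_jean_contact_work_general θ (fun α _ => neg_one_lt_zero.trans_le (he α).1) hPout
    (fun α hα => (hc α hα).1) (fun α hα => (hc α hα).2.2.1) (fun α hα => (hc α hα).2.2.2)
end

section
/- If 2β = γ = θ, then any solution of the two-equation form of the nonsmooth Newmark scheme satisfies q_{k+1} = q_k + h·(1/2)(v_k + v_{k+1}) and M(v_{k+1}−v_k) + hK q_{k+θ} + hC v_{k+θ} − hF_{k+θ} = G P_{k+1}; that is, the nonsmooth Newmark scheme with 2β = γ = θ coincides with the variant of the Moreau–Jean scheme in which the position update uses the midpoint velocity. -/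
open Matrix

section NonsmoothNewmark

variable {𝕜 ι : Type*} [Field 𝕜] [Fintype ι]

/-- The regular impulse `h (F_s - K q_s - C v_s)` of a step of length `h`, with `x_s` the affine
interpolation between `x` and `x'`; it occurs in both equations of the Newmark scheme, at `s = γ`
and at `s = 2β`. -/
def regularImpulse (h s : 𝕜) (K C : Matrix ι ι 𝕜) (q q' v v' F F' : ι → 𝕜) : ι → 𝕜 :=
  h • (AffineMap.lineMap F F' s - K *ᵥ AffineMap.lineMap q q' s - C *ᵥ AffineMap.lineMap v v' s)

/-- A step of the two-equation nonsmooth Newmark scheme from `(q, v, F)` to `(q', v', F')`; for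
singular `M`, Mathlib sets `M⁻¹ = 0`. The reaction impulse `r` stands for `G P`. -/
def IsNonsmoothNewmarkStep [DecidableEq ι] (h γ β : 𝕜) (M K C : Matrix ι ι 𝕜)
    (q q' v v' F F' r : ι → 𝕜) : Prop :=
  M *ᵥ (v' - v) = regularImpulse h γ K C q q' v v' F F' + r ∧
    q' = q + h • v + (h / 2) • (M⁻¹ *ᵥ (regularImpulse h (2 * β) K C q q' v v' F F' + r))

/-- A step of the Moreau–Jean scheme with the position updated by the midpoint velocity instead of
the velocity at `θ`. The reaction impulse `r` stands for `G P`. -/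
def IsMidpointMoreauJeanStep (h θ : 𝕜) (M K C : Matrix ι ι 𝕜)
    (q q' v v' F F' r : ι → 𝕜) : Prop :=
  M *ᵥ (v' - v) + h • K *ᵥ AffineMap.lineMap q q' θ + h • C *ᵥ AffineMap.lineMap v v' θ
      - h • AffineMap.lineMap F F' θ = r ∧
    q' = q + h • ((1 / 2 : 𝕜) • (v + v'))

theorem eq_regularImpulse_add_iff {h s : 𝕜} {K C : Matrix ι ι 𝕜}
    {q q' v v' F F' r p : ι → 𝕜} :
    p = regularImpulse h s K C q q' v v' F F' + r ↔
      p + h • K *ᵥ AffineMap.lineMap q q' s + h • C *ᵥ AffineMap.lineMap v v' s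
        - h • AffineMap.lineMap F F' s = r := by
  have residual_eq : p - regularImpulse h s K C q q' v v' F F' =
      p + h • K *ᵥ AffineMap.lineMap q q' s + h • C *ᵥ AffineMap.lineMap v v' s
        - h • AffineMap.lineMap F F' s := by
    rw [regularImpulse]
    module
  rw [← sub_eq_iff_eq_add', residual_eq]

theorem smul_add_half_smul_sub [NeZero (2 : 𝕜)] {E : Type*} [AddCommGroup E] [Module 𝕜 E]
    (h : 𝕜) (v v' : E) :
    h • v + (h / 2) • (v' - v) = h • ((1 / 2 : 𝕜) • (v + v')) := by
  match_scalars <;> field_simp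
  ring

theorem nonsmooth_newmark_is_moreau_jean_variant_general [DecidableEq ι] [NeZero (2 : 𝕜)]
    {h γ β θ : 𝕜} {M K C : Matrix ι ι 𝕜} {q q' v v' F F' r : ι → 𝕜}
    (hM : IsUnit M.det) (hβγ : 2 * β = γ) (hγθ : γ = θ) :
    IsNonsmoothNewmarkStep h γ β M K C q q' v v' F F' r ↔
      IsMidpointMoreauJeanStep h θ M K C q q' v v' F F' r := by
  subst hγθ
  rw [IsNonsmoothNewmarkStep, IsMidpointMoreauJeanStep, hβγ, ← eq_regularImpulse_add_iff]
  refine and_congr_right fun momentum => ?_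
  have velocity_jump : M⁻¹ *ᵥ (regularImpulse h γ K C q q' v v' F F' + r) = v' - v := by
    rw [← momentum, mulVec_mulVec, nonsing_inv_mul M hM, one_mulVec]
  rw [velocity_jump, add_assoc, smul_add_half_smul_sub]

end NonsmoothNewmark

/-- With `2β = γ = θ`, the two-equation form of the nonsmooth Newmark scheme
coincides with the variant of the Moreau–Jean scheme whose position update uses
the midpoint velocity. -/
theorem nonsmooth_newmark_is_moreau_jean_variant
    (n m : ℕ) (hn : 1 ≤ n) (hm : 1 ≤ m)
    (h γ β θ : ℝ) (hh : 0 < h)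
    (M K C : Matrix (Fin n) (Fin n) ℝ) (G : Matrix (Fin n) (Fin m) ℝ)
    (hMs : M.IsSymm) (hMdet : IsUnit M.det)
    (qk qk1 vk vk1 Fk Fk1 : Fin n → ℝ) (P : Fin m → ℝ)
    (hβγ : 2 * β = γ) (hγθ : γ = θ)
    (h1 : M.mulVec (vk1 - vk)
        = h • (((1 - γ) • Fk + γ • Fk1)
            - K.mulVec ((1 - γ) • qk + γ • qk1)
            - C.mulVec ((1 - γ) • vk + γ • vk1)) + G.mulVec P)
    (h2 : qk1 = qk + h • vk + (h / 2) • (M⁻¹.mulVec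
        (h • (((1 - 2 * β) • Fk + (2 * β) • Fk1)
            - K.mulVec ((1 - 2 * β) • qk + (2 * β) • qk1)
            - C.mulVec ((1 - 2 * β) • vk + (2 * β) • vk1)) + G.mulVec P))) :
    qk1 = qk + h • ((1/2 : ℝ) • (vk + vk1))
    ∧ M.mulVec (vk1 - vk) + h • K.mulVec ((1 - θ) • qk + θ • qk1)
        + h • C.mulVec ((1 - θ) • vk + θ • vk1)
        - h • ((1 - θ) • Fk + θ • Fk1) = G.mulVec P := by
  simp only [← AffineMap.lineMap_apply_module] at h1 h2 ⊢
  exact ((nonsmooth_newmark_is_moreau_jean_variant_general hMdet hβγ hγθ).1 ⟨h1, h2⟩).symm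
end

section
/- If local velocities U_k, U_{k+1} ∈ ℝᵐ and an impulse P_{k+1} ∈ ℝᵐ satisfy the discrete contact conditions, then the discrete work of the contact impulses is nonpositive: U_{k+1/2}ᵀ P_{k+1} ≤ 0, where U_{k+1/2} = (1/2)(U_k + U_{k+1}). -/
open Matrix

section OrderedRing

variable {R : Type*} [CommRing R]

lemma add_mul_eq_of_complementarity {u u' p e : R} (hcompl : (u' + e * u) * p = 0) :
    (u + u') * p = (1 - e) * (u * p) := by
  linear_combination hcompl

variable [PartialOrder R] [IsOrderedRing R]

lemma add_mul_nonpos_of_complementarity {u u' p e : R} (he : e ≤ 1) (hu : u ≤ 0) (hp : 0 ≤ p)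
    (hcompl : (u' + e * u) * p = 0) : (u + u') * p ≤ 0 :=
  calc
    (u + u') * p = (1 - e) * (u * p) := add_mul_eq_of_complementarity hcompl
    _ ≤ 0 := mul_nonpos_of_nonneg_of_nonpos (sub_nonneg.2 he) (mul_nonpos_of_nonpos_of_nonneg hu hp)

lemma add_dotProduct_nonpos_of_complementarity {ι : Type*} [Fintype ι] {U U' P e : ι → R}
    {I : Set ι} (hout : ∀ α ∉ I, P α = 0) (he : ∀ α ∈ I, e α ≤ 1) (hU : ∀ α ∈ I, U α ≤ 0)
    (hP : ∀ α ∈ I, 0 ≤ P α) (hcompl : ∀ α ∈ I, (U' α + e α * U α) * P α = 0) :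
    (U + U') ⬝ᵥ P ≤ 0 := by
  refine Finset.sum_nonpos fun α _ ↦ ?_
  by_cases hα : α ∈ I
  · exact add_mul_nonpos_of_complementarity (he α hα) (hU α hα) (hP α hα) (hcompl α hα)
  · exact (mul_eq_zero_of_right _ (hout α hα)).le

end OrderedRing

theorem discrete_contact_work_nonpositive_general {R ι : Type*} [Field R] [LinearOrder R]
    [IsStrictOrderedRing R] [Fintype ι] {U U' P e : ι → R} {I : Set ι}
    (hout : ∀ α ∉ I, P α = 0) (he : ∀ α ∈ I, e α ≤ 1) (hU : ∀ α ∈ I, U α ≤ 0)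
    (hP : ∀ α ∈ I, 0 ≤ P α) (hcompl : ∀ α ∈ I, (U' α + e α * U α) * P α = 0) :
    ((1 / 2 : R) • (U + U')) ⬝ᵥ P ≤ 0 := by
  rw [smul_dotProduct]
  exact smul_nonpos_of_nonneg_of_nonpos one_half_pos.le
    (add_dotProduct_nonpos_of_complementarity hout he hU hP hcompl)

/-- Under the discrete contact conditions the discrete work of the contact
impulses is nonpositive: `U_{k+1/2}ᵀ P_{k+1} ≤ 0`. -/
theorem discrete_contact_work_nonpositive
    (m : ℕ) (hm : 1 ≤ m)
    (Uk Uk1 P : Fin m → ℝ)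
    (e : Fin m → ℝ) (I₁ : Finset (Fin m))
    (he : ∀ α, 0 ≤ e α ∧ e α ≤ 1)
    (hPout : ∀ α ∉ I₁, P α = 0)
    (hc : ∀ α ∈ I₁, Uk α ≤ 0
        ∧ 0 ≤ Uk1 α + e α * Uk α
        ∧ 0 ≤ P α
        ∧ (Uk1 α + e α * Uk α) * P α = 0) :
    ((1/2 : ℝ) • (Uk + Uk1)) ⬝ᵥ P ≤ 0 :=
  discrete_contact_work_nonpositive_general (I := ↑I₁) hPout (fun α _ ↦ (he α).2)
    (fun α hα ↦ (hc α hα).1) (fun α hα ↦ (hc α hα).2.2.1) (fun α hα ↦ (hc α hα).2.2.2)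
end
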